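/- Let (u,τ) be a classical solution of the p-system on ℝ×[0,T) (T a finite positive constant or infinity), twice continuously differentiable, such that at t=0 the functions u(·,0), τ(·,0)>0, ρ(·,0)=1/τ(·,0), α(·,0), β(·,0) are all uniformly bounded. Then the maximum rarefaction is non-increasing in time: for any 0 ≤ t₁ ≤ t₂ < T, sup_{x∈ℝ} max{α(x,t₂), β(x,t₂)} ≤ sup_{x∈ℝ} max{α(x,t₁), β(x,t₁)}. -/

import Mathlib

open Real Set MeasureTheory

noncomputable section

/-- Partial derivative in the spatial variable `x`. -/
def pdx (f : ℝ → ℝ → ℝ) (x t : ℝ) : ℝ := deriv (fun y => f y t) x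

/-- Partial derivative in the time variable `t`. -/
def pdt (f : ℝ → ℝ → ℝ) (x t : ℝ) : ℝ := deriv (fun s => f x s) t

/-- The time strip `ℝ × [0, T)`, where `T` is a real number or `+∞`. -/
def strip (T : EReal) : Set (ℝ × ℝ) := {p : ℝ × ℝ | 0 ≤ p.2 ∧ (p.2 : EReal) < T}

/-- `η = (2√(Kγ)/(γ−1)) τ^{−(γ−1)/2}`. -/
def etaP (K γ : ℝ) (τ : ℝ → ℝ → ℝ) (x t : ℝ) : ℝ :=
  2 * Real.sqrt (K * γ) / (γ - 1) * τ x t ^ (-(γ - 1) / 2)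

/-- Gradient variable `α = s_x = u_x + η_x` for the p-system. -/
def alphaP (K γ : ℝ) (u τ : ℝ → ℝ → ℝ) (x t : ℝ) : ℝ :=
  pdx u x t + pdx (etaP K γ τ) x t

/-- Gradient variable `β = r_x = u_x − η_x` for the p-system. -/
def betaP (K γ : ℝ) (u τ : ℝ → ℝ → ℝ) (x t : ℝ) : ℝ :=
  pdx u x t - pdx (etaP K γ τ) x t

/-- The p-system `τ_t − u_x = 0`, `u_t + p_x = 0` with `p = K τ^{−γ}`, at the point `(x,t)`. -/
def pSystem (K γ : ℝ) (u τ : ℝ → ℝ → ℝ) (x t : ℝ) : Prop :=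
  pdt τ x t - pdx u x t = 0 ∧
  pdt u x t + pdx (fun y s => K * τ y s ^ (-γ)) x t = 0

/-- Riemann invariant `s = u + η`. -/
def sRi (K γ : ℝ) (u τ : ℝ → ℝ → ℝ) (x t : ℝ) : ℝ := u x t + etaP K γ τ x t

/-- Riemann invariant `r = u − η`. -/
def rRi (K γ : ℝ) (u τ : ℝ → ℝ → ℝ) (x t : ℝ) : ℝ := u x t - etaP K γ τ x t

/-- The Lagrangian wave speed `c = √(Kγ) τ^{−(γ+1)/2}`. -/
def cP (K γ : ℝ) (τ : ℝ → ℝ → ℝ) (x t : ℝ) : ℝ :=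
  Real.sqrt (K * γ) * τ x t ^ (-(γ + 1) / 2)

/-- The constant `K_τ = (2√(Kγ)/(γ−1))^{2/(γ−1)}`. -/
def KtauC (K γ : ℝ) : ℝ := (2 * Real.sqrt (K * γ) / (γ - 1)) ^ (2 / (γ - 1))

/-- The constant `K_c = √(Kγ) K_τ^{−(γ+1)/2}`. -/
def KcC (K γ : ℝ) : ℝ := Real.sqrt (K * γ) * KtauC K γ ^ (-(γ + 1) / 2)

/-- `k₁ = ((γ+1)K_c/(2(γ−1))) η^{2/(γ−1)}`. -/
def k1P (K γ : ℝ) (τ : ℝ → ℝ → ℝ) (x t : ℝ) : ℝ :=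
  (γ + 1) * KcC K γ / (2 * (γ - 1)) * etaP K γ τ x t ^ (2 / (γ - 1))

/-! The Riemann invariants `s` and `r` are transported with speeds `c` and `-c`, so `s` and `-r`
keep their initial upper bounds, and `c`, an increasing function of `η = (s - r) / 2`, stays
bounded: signals have finite speed. Put `k = (γ + 1) / (4 τ)`. Differentiating the transport
equations in `x`, with `c_x = k (α - β)`, gives the Riccati equations
`α_t + c α_x = k α (β - α)` and `β_t - c β_x = k β (α - β)`. Where the larger of `α` and `β` is
nonnegative, its derivative along its own characteristic is therefore nonpositive, and a maximum
principle on backward cones propagates every nonnegative bound of both forward in time. A negative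
bound never occurs: it would make `s` unbounded as `x → -∞`. -/

open Filter Topology
open Function (uncurry)

section MaximumPrinciple

variable {E : Type*} [NormedAddCommGroup E]

/-- The part above time `a` of the backward cone with apex `p` and aperture `Λ`: the domain of
dependence of `p` for signals of speed at most `Λ`. A point `q` has position `q.1` and time
`q.2`. -/
def backwardCone (Λ a : ℝ) (p : E × ℝ) : Set (E × ℝ) :=
  {q | q.2 ∈ Icc a p.2 ∧ ‖q.1 - p.1‖ ≤ Λ * (p.2 - q.2)}

variable {Λ a : ℝ}

theorem self_mem_backwardCone {p : E × ℝ} (hp : a ≤ p.2) : p ∈ backwardCone Λ a p :=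
  ⟨⟨hp, le_rfl⟩, by simp⟩

theorem backwardCone_subset_backwardCone {p q : E × ℝ} (hq : q ∈ backwardCone Λ a p) :
    backwardCone Λ a q ⊆ backwardCone Λ a p := by
  rintro r ⟨⟨har, hrq⟩, hr⟩
  refine ⟨⟨har, hrq.trans hq.1.2⟩, ?_⟩
  calc ‖r.1 - p.1‖ ≤ ‖r.1 - q.1‖ + ‖q.1 - p.1‖ := norm_sub_le_norm_sub_add_norm_sub ..
    _ ≤ Λ * (q.2 - r.2) + Λ * (p.2 - q.2) := add_le_add hr hq.2
    _ = Λ * (p.2 - r.2) := by ring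

theorem eq_of_mem_backwardCone_of_le {p q : E × ℝ} (hq : q ∈ backwardCone Λ a p)
    (h : p.2 ≤ q.2) : q = p := by
  have htime : q.2 = p.2 := hq.1.2.antisymm h
  refine Prod.ext ?_ htime
  simpa [htime, sub_eq_zero] using hq.2

theorem isClosed_backwardCone (p : E × ℝ) : IsClosed (backwardCone Λ a p) :=
  (isClosed_Icc.preimage continuous_snd).inter <|
    isClosed_le (f := fun q : E × ℝ => ‖q.1 - p.1‖) (g := fun q => Λ * (p.2 - q.2))
      (by fun_prop) (by fun_prop)

theorem isCompact_backwardCone [ProperSpace E] (hΛ : 0 ≤ Λ) (p : E × ℝ) :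
    IsCompact (backwardCone Λ a p) := by
  refine ((isCompact_closedBall p.1 (Λ * (p.2 - a))).prod isCompact_Icc).of_isClosed_subset
    (isClosed_backwardCone p) fun q hq => ⟨?_, hq.1⟩
  rw [mem_closedBall_iff_norm]
  exact hq.2.trans (mul_le_mul_of_nonneg_left (sub_le_sub_left hq.1.1 _) hΛ)

theorem eventually_add_smul_mem_backwardCone [NormedSpace ℝ E] {p : E × ℝ} (hp : a < p.2) {v : E}
    (hv : ‖v‖ ≤ Λ) : ∀ᶠ h in 𝓝[>] (0 : ℝ), p + h • -(v, (1 : ℝ)) ∈ backwardCone Λ a p := by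
  filter_upwards [Ioo_mem_nhdsGT (sub_pos.mpr hp)] with h ⟨hpos, hlt⟩
  refine ⟨⟨?_, ?_⟩, ?_⟩
  · simp; linarith
  · simp; linarith
  · simpa [norm_smul, abs_of_pos hpos, mul_comm Λ] using mul_le_mul_of_nonneg_left hv hpos.le

theorem fderiv_nonneg_of_isMaxOn_backwardCone [NormedSpace ℝ E] {f : E × ℝ → ℝ} {p : E × ℝ}
    (hmax : IsMaxOn f (backwardCone Λ a p) p) (hf : DifferentiableAt ℝ f p) (hp : a < p.2) {v : E}
    (hv : ‖v‖ ≤ Λ) : 0 ≤ fderiv ℝ f p (v, 1) := by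
  have hcone : -(v, (1 : ℝ)) ∈ posTangentConeAt (backwardCone Λ a p) p :=
    mem_posTangentConeAt_of_frequently_mem (eventually_add_smul_mem_backwardCone hp hv).frequently
  simpa only [map_neg, neg_nonpos] using
    hmax.localize.hasFDerivWithinAt_nonpos hf.hasFDerivAt.hasFDerivWithinAt hcone

variable {ι : Type*} [Finite ι] {f : ι → E × ℝ → ℝ}

theorem exists_first_nonneg_of_backwardCone [ProperSpace E] (hΛ : 0 ≤ Λ) {z : E × ℝ} (hz : a ≤ z.2)
    (hf : ∀ i, ContinuousOn (f i) (backwardCone Λ a z)) {i : ι} (hi : 0 ≤ f i z) :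
    ∃ p ∈ backwardCone Λ a z, (∃ i, 0 ≤ f i p) ∧
      ∀ q ∈ backwardCone Λ a p, q.2 < p.2 → ∀ j, f j q < 0 := by
  have hcompact : IsCompact (⋃ j, backwardCone Λ a z ∩ f j ⁻¹' Ici 0) :=
    isCompact_iUnion fun j => (isCompact_backwardCone hΛ z).of_isClosed_subset
      ((hf j).preimage_isClosed_of_isClosed (isClosed_backwardCone z) isClosed_Ici)
      inter_subset_left
  obtain ⟨p, hp, hmin⟩ := hcompact.exists_isMinOn
    ⟨z, mem_iUnion.mpr ⟨i, self_mem_backwardCone hz, hi⟩⟩ continuous_snd.continuousOn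
  obtain ⟨k, hpz, hk⟩ := mem_iUnion.mp hp
  refine ⟨p, hpz, ⟨k, hk⟩, fun q hq hlt j => ?_⟩
  by_contra! hj
  exact hlt.not_ge <| hmin <| mem_iUnion.mpr ⟨j, backwardCone_subset_backwardCone hpz hq, hj⟩

variable [NormedSpace ℝ E]

theorem nonpos_of_forall_mem_backwardCone {g : E × ℝ → ℝ} {p : E × ℝ} (hΛ : 0 ≤ Λ) (hp : a < p.2)
    (hg : ContinuousAt g p) (hneg : ∀ q ∈ backwardCone Λ a p, q.2 < p.2 → g q < 0) : g p ≤ 0 := by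
  have hline : Tendsto (fun h : ℝ => p + h • -((0 : E), (1 : ℝ))) (𝓝[>] 0) (𝓝 p) :=
    ((by fun_prop : Continuous fun h : ℝ => p + h • -((0 : E), (1 : ℝ))).tendsto' 0 p
      (by simp)).mono_left nhdsWithin_le_nhds
  refine le_of_tendsto (hg.tendsto.comp hline) ?_
  filter_upwards [eventually_add_smul_mem_backwardCone hp (norm_zero.trans_le hΛ),
    self_mem_nhdsWithin] with h hmem hpos
  exact (hneg _ hmem (by simpa using hpos)).le

theorem neg_of_fderiv_neg_of_first_zero [ProperSpace E] {b : ℝ}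
    (hcont : ∀ i, ContinuousOn (f i) {p | p.2 ∈ Icc a b})
    (hdiff : ∀ i p, p.2 ∈ Ioc a b → DifferentiableAt ℝ (f i) p)
    (hinit : ∀ i x, f i (x, a) < 0)
    (hzero : ∀ i p, p.2 ∈ Ioc a b → f i p = 0 → (∀ j, f j p ≤ 0) →
      ∃ v : E, ‖v‖ ≤ Λ ∧ fderiv ℝ (f i) p (v, 1) < 0)
    (i : ι) {p : E × ℝ} (hp : p.2 ∈ Icc a b) : f i p < 0 := by
  wlog hΛ : 0 ≤ Λ generalizing Λ
  · exact this (Λ := 0) (fun i p hp hi hj => (hzero i p hp hi hj).imp fun v hv =>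
      ⟨hv.1.trans (not_le.mp hΛ).le, hv.2⟩) le_rfl
  by_contra! hi
  obtain ⟨q, hq, ⟨k, hk⟩, hbefore⟩ := exists_first_nonneg_of_backwardCone hΛ hp.1
    (fun j => (hcont j).mono fun r hr => ⟨hr.1.1, hr.1.2.trans hp.2⟩) hi
  have hqa : a < q.2 := by
    refine hq.1.1.lt_of_ne fun h => (hinit k q.1).not_ge ?_
    rwa [h]
  have hqb : q.2 ∈ Ioc a b := ⟨hqa, hq.1.2.trans hp.2⟩
  have hle : ∀ j, f j q ≤ 0 := fun j => nonpos_of_forall_mem_backwardCone hΛ hqa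
    (hdiff j q hqb).continuousAt fun r hr hlt => hbefore r hr hlt j
  have hqk : f k q = 0 := (hle k).antisymm hk
  have hmax : IsMaxOn (f k) (backwardCone Λ a q) q := fun r hr => by
    rcases lt_or_ge r.2 q.2 with hlt | hge
    · exact (hbefore r hr hlt k).le.trans hk
    · exact (congrArg (f k) (eq_of_mem_backwardCone_of_le hr hge)).le
  obtain ⟨v, hv, hneg⟩ := hzero k q hqb hqk hle
  exact hneg.not_ge (fderiv_nonneg_of_isMaxOn_backwardCone hmax (hdiff k q hqb) hqa hv)

theorem le_add_of_fderiv_nonpos_of_max [ProperSpace E] {b m δ : ℝ} (hδ : 0 < δ)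
    (hcont : ∀ i, ContinuousOn (f i) {p | p.2 ∈ Icc a b})
    (hdiff : ∀ i p, p.2 ∈ Ioc a b → DifferentiableAt ℝ (f i) p)
    (hinit : ∀ i x, f i (x, a) ≤ m)
    (hmax : ∀ i p, p.2 ∈ Ioc a b → f i p ∈ Ioc m (m + δ) → (∀ j, f j p ≤ f i p) →
      ∃ v : E, ‖v‖ ≤ Λ ∧ fderiv ℝ (f i) p (v, 1) ≤ 0)
    (i : ι) {p : E × ℝ} (hp : p.2 ∈ Icc a b) : f i p ≤ m + δ := by
  have hlen : 0 < 1 + (b - a) := by linarith [hp.1.trans hp.2]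
  -- A barrier growing at rate `ε` turns the weak inequality into a strict one.
  set ε := δ / (1 + (b - a))
  have hε_pos : 0 < ε := by positivity
  have hbarrier : ∀ t ≤ b, ε * (1 + (t - a)) ≤ δ := fun t ht => by
    calc ε * (1 + (t - a)) ≤ ε * (1 + (b - a)) := by gcongr
      _ = δ := div_mul_cancel₀ δ hlen.ne'
  have hlt := neg_of_fderiv_neg_of_first_zero (Λ := Λ) (a := a) (b := b)
    (f := fun j q => f j q - (m + ε * (1 + (q.2 - a))))
    (fun j => (hcont j).sub (by fun_prop)) (fun j q hq => (hdiff j q hq).sub (by fun_prop))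
    (fun j x => by simp only [sub_self]; linarith [hinit j x])
    (fun j q hq hj hle => ?_) i hp
  · linarith [hbarrier p.2 hp.2]
  · have hgrow : 0 < ε * (1 + (q.2 - a)) := mul_pos hε_pos (by linarith [hq.1])
    obtain ⟨v, hv, hfv⟩ := hmax j q hq ⟨by linarith, by linarith [hbarrier q.2 hq.2]⟩
      fun k => by linarith [hle k]
    refine ⟨v, hv, ?_⟩
    have hderiv : HasFDerivAt (fun r : E × ℝ => m + ε * (1 + (r.2 - a)))
        (ε • ContinuousLinearMap.snd ℝ E ℝ) q :=
      (((hasFDerivAt_snd.sub_const a).const_add 1).const_mul ε).const_add m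
    rw [((hdiff j q hq).hasFDerivAt.fun_sub hderiv).fderiv]
    simpa using hfv.trans_lt hε_pos

theorem le_of_fderiv_nonpos_of_max [ProperSpace E] {b m δ : ℝ} (hδ : 0 < δ)
    (hcont : ∀ i, ContinuousOn (f i) {p | p.2 ∈ Icc a b})
    (hdiff : ∀ i p, p.2 ∈ Ioc a b → DifferentiableAt ℝ (f i) p)
    (hinit : ∀ i x, f i (x, a) ≤ m)
    (hmax : ∀ i p, p.2 ∈ Ioc a b → f i p ∈ Ioc m (m + δ) → (∀ j, f j p ≤ f i p) →
      ∃ v : E, ‖v‖ ≤ Λ ∧ fderiv ℝ (f i) p (v, 1) ≤ 0)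
    (i : ι) {p : E × ℝ} (hp : p.2 ∈ Icc a b) : f i p ≤ m := by
  refine le_of_forall_pos_le_add fun δ' hδ' => ?_
  have hle := le_add_of_fderiv_nonpos_of_max (lt_min hδ' hδ) hcont hdiff hinit
    (fun j q hq hj => hmax j q hq ⟨hj.1, hj.2.trans (by grw [min_le_right])⟩) i hp
  exact hle.trans (by grw [min_le_left])

end MaximumPrinciple

theorem fderiv_fderiv_apply_of_fderiv_eq_zero {F : Type*} [NormedAddCommGroup F] [NormedSpace ℝ F]
    {S : F → ℝ} {V : F → F} {p : F} (hS : ContDiffAt ℝ 2 S p) (hV : DifferentiableAt ℝ V p)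
    (h : ∀ᶠ q in 𝓝 p, fderiv ℝ S q (V q) = 0) (w : F) :
    DifferentiableAt ℝ (fun q => fderiv ℝ S q w) p ∧
      fderiv ℝ (fun q => fderiv ℝ S q w) p (V p) = -fderiv ℝ S p (fderiv ℝ V p w) := by
  have hD : DifferentiableAt ℝ (fderiv ℝ S) p :=
    (hS.fderiv_right (m := 1) (by norm_num)).differentiableAt one_ne_zero
  have hDw : HasFDerivAt (fun q => fderiv ℝ S q w) ((fderiv ℝ (fderiv ℝ S) p).flip w) p := by
    simpa using hD.hasFDerivAt.clm_apply (hasFDerivAt_const w p)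
  have hDV := hD.hasFDerivAt.clm_apply hV.hasFDerivAt
  have hDV_zero := DFunLike.congr_fun
    (hDV.unique ((hasFDerivAt_const (0 : ℝ) p).congr_of_eventuallyEq h)) w
  have hsymm : fderiv ℝ (fderiv ℝ S) p w (V p) = fderiv ℝ (fderiv ℝ S) p (V p) w :=
    (hS.isSymmSndFDerivAt (by simp)).eq _ _
  simp only [add_apply, ContinuousLinearMap.comp_apply, ContinuousLinearMap.flip_apply,
    zero_apply] at hDV_zero
  refine ⟨hDw.differentiableAt, ?_⟩
  rw [hDw.fderiv, ContinuousLinearMap.flip_apply]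
  linarith

theorem nonneg_of_deriv_le_of_bddAbove {f : ℝ → ℝ} {M : ℝ} (hf : Differentiable ℝ f)
    (hM : ∀ x, deriv f x ≤ M) (hbdd : BddAbove (range f)) : 0 ≤ M := by
  obtain ⟨B, hB⟩ := hbdd
  replace hB : ∀ x, f x ≤ B := fun x => hB (mem_range_self x)
  by_contra! hneg
  have hy : (B - f 0 + 1) / M ≤ 0 :=
    div_nonpos_of_nonneg_of_nonpos (by linarith [hB 0]) hneg.le
  have hgrow := image_sub_le_mul_sub_of_deriv_le hf hM hy
  rw [zero_sub, mul_neg, mul_div_cancel₀ _ hneg.ne] at hgrow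
  linarith [hB ((B - f 0 + 1) / M)]

theorem hasDerivAt_spatial_slice {F : ℝ → ℝ → ℝ} {S : Set (ℝ × ℝ)} {F' : ℝ × ℝ →L[ℝ] ℝ} {p : ℝ × ℝ}
    (hF : HasFDerivWithinAt (uncurry F) F' S p) (hS : ∀ x, (x, p.2) ∈ S) :
    HasDerivAt (fun x => F x p.2) (F' (1, 0)) p.1 :=
  have hline : HasDerivAt (fun x : ℝ => (x, p.2)) ((1 : ℝ), (0 : ℝ)) p.1 :=
    (hasDerivAt_id p.1).prodMk (hasDerivAt_const p.1 p.2)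
  HasFDerivWithinAt.comp_hasDerivAt_of_eq p.1 hF hline (Eventually.of_forall hS) rfl

theorem pdx_eq_fderiv {F : ℝ → ℝ → ℝ} {p : ℝ × ℝ} (hF : DifferentiableAt ℝ (uncurry F) p) :
    pdx F p.1 p.2 = fderiv ℝ (uncurry F) p (1, 0) :=
  (hasDerivAt_spatial_slice hF.hasFDerivAt.hasFDerivWithinAt fun _ => mem_univ _).deriv

theorem pdt_eq_fderiv {F : ℝ → ℝ → ℝ} {p : ℝ × ℝ} (hF : DifferentiableAt ℝ (uncurry F) p) :
    pdt F p.1 p.2 = fderiv ℝ (uncurry F) p (0, 1) :=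
  have hline : HasDerivAt (fun t : ℝ => (p.1, t)) ((0 : ℝ), (1 : ℝ)) p.2 :=
    (hasDerivAt_const p.2 p.1).prodMk (hasDerivAt_id p.2)
  (HasFDerivAt.comp_hasDerivAt_of_eq p.2 hF.hasFDerivAt hline rfl).deriv

section Strip

variable {T : EReal}

theorem interior_strip : interior (strip T) = {p : ℝ × ℝ | 0 < p.2 ∧ (p.2 : EReal) < T} := by
  have hT : IsOpen {t : ℝ | (t : EReal) < T} :=
    isOpen_lt continuous_coe_real_ereal continuous_const
  have hstrip : strip T = Prod.snd ⁻¹' (Ici 0 ∩ {t : ℝ | (t : EReal) < T}) := rfl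
  rw [hstrip, ← isOpenMap_snd.preimage_interior_eq_interior_preimage continuous_snd,
    interior_inter, interior_Ici, hT.interior_eq]
  rfl

theorem slab_subset_strip {a b : ℝ} (ha : 0 ≤ a) (hb : (b : EReal) < T) :
    {p : ℝ × ℝ | p.2 ∈ Icc a b} ⊆ strip T :=
  fun _ hp => ⟨ha.trans hp.1, (EReal.coe_le_coe_iff.mpr hp.2).trans_lt hb⟩

theorem mem_interior_strip_of_mem_Ioc {a b : ℝ} (ha : 0 ≤ a) (hb : (b : EReal) < T) {p : ℝ × ℝ}
    (hp : p.2 ∈ Ioc a b) : p ∈ interior (strip T) := by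
  rw [interior_strip]
  exact ⟨ha.trans_lt hp.1, (EReal.coe_le_coe_iff.mpr hp.2).trans_lt hb⟩

theorem uniqueDiffOn_strip (hT : 0 < T) : UniqueDiffOn ℝ (strip T) := by
  have htimes : OrdConnected {t : ℝ | 0 ≤ t ∧ (t : EReal) < T} :=
    ⟨fun _ hs _ ht _ hr =>
      ⟨hs.1.trans hr.1, (EReal.coe_le_coe_iff.mpr hr.2).trans_lt ht.2⟩⟩
  refine uniqueDiffOn_convex (htimes.convex.linear_preimage (LinearMap.snd ℝ ℝ ℝ)) ?_
  obtain ⟨t, ht₀, htT⟩ := EReal.lt_iff_exists_real_btwn.mp hT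
  exact ⟨(0, t), interior_strip ▸ ⟨EReal.coe_pos.mp ht₀, htT⟩⟩

theorem continuousOn_pdx {F : ℝ → ℝ → ℝ} (hT : 0 < T) (hF : ContDiffOn ℝ 1 (uncurry F) (strip T)) :
    ContinuousOn (uncurry (pdx F)) (strip T) :=
  ((hF.continuousOn_fderivWithin (uniqueDiffOn_strip hT) le_rfl).clm_apply
    continuousOn_const).congr fun p hp =>
      (hasDerivAt_spatial_slice (hF.differentiableOn one_ne_zero p hp).hasFDerivWithinAt
        fun _ => hp).deriv

end Strip

theorem le_of_opposite_transport {c f g : ℝ × ℝ → ℝ} {Λ a b m δ : ℝ} (hδ : 0 < δ)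
    (hf : ContinuousOn f {p | p.2 ∈ Icc a b}) (hg : ContinuousOn g {p | p.2 ∈ Icc a b})
    (hf' : ∀ p : ℝ × ℝ, p.2 ∈ Ioc a b → DifferentiableAt ℝ f p)
    (hg' : ∀ p : ℝ × ℝ, p.2 ∈ Ioc a b → DifferentiableAt ℝ g p)
    (hf₀ : ∀ x, f (x, a) ≤ m) (hg₀ : ∀ x, g (x, a) ≤ m)
    (hc : ∀ p : ℝ × ℝ, p.2 ∈ Ioc a b → f p ≤ m + δ → g p ≤ m + δ → |c p| ≤ Λ)
    (hfc : ∀ p : ℝ × ℝ, p.2 ∈ Ioc a b → m < f p → g p ≤ f p → fderiv ℝ f p (c p, 1) ≤ 0)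
    (hgc : ∀ p : ℝ × ℝ, p.2 ∈ Ioc a b → m < g p → f p ≤ g p → fderiv ℝ g p (-c p, 1) ≤ 0)
    {p : ℝ × ℝ} (hp : p.2 ∈ Icc a b) : f p ≤ m ∧ g p ≤ m := by
  have hle := le_of_fderiv_nonpos_of_max (f := fun i : Bool => cond i f g) (Λ := Λ) hδ
    (Bool.forall_bool.mpr ⟨hg, hf⟩) (Bool.forall_bool.mpr ⟨hg', hf'⟩)
    (Bool.forall_bool.mpr ⟨hg₀, hf₀⟩) (fun i q hq ⟨hlow, hup⟩ hmax => ?_)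
  · exact ⟨hle true hp, hle false hp⟩
  · obtain ⟨hgi, hfi⟩ := Bool.forall_bool.mp hmax
    have hspeed := hc q hq (hfi.trans hup) (hgi.trans hup)
    cases i with
    | true => exact ⟨c q, hspeed, hfc q hq hlow hgi⟩
    | false => exact ⟨-c q, (norm_neg (c q)).trans_le hspeed, hgc q hq hlow hfi⟩

theorem fderiv_spatial_deriv_of_transport {c S : ℝ × ℝ → ℝ} {p : ℝ × ℝ}
    (hS : ContDiffAt ℝ 2 S p) (hc : DifferentiableAt ℝ c p)
    (h : ∀ᶠ q in 𝓝 p, fderiv ℝ S q (c q, 1) = 0) :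
    DifferentiableAt ℝ (fun q => fderiv ℝ S q (1, 0)) p ∧
      fderiv ℝ (fun q => fderiv ℝ S q (1, 0)) p (c p, 1) =
        -(fderiv ℝ c p (1, 0) * fderiv ℝ S p (1, 0)) := by
  have hV := hc.hasFDerivAt.prodMk (hasFDerivAt_const (1 : ℝ) p)
  have hdir : fderiv ℝ (fun q => (c q, (1 : ℝ))) p (1, 0) =
      fderiv ℝ c p (1, 0) • ((1 : ℝ), (0 : ℝ)) := by
    rw [hV.fderiv]
    simp
  have hmain := fderiv_fderiv_apply_of_fderiv_eq_zero hS hV.differentiableAt h (1, 0)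
  rwa [hdir, map_smul, smul_eq_mul] at hmain

section ConstitutiveLaw

variable {K γ : ℝ} {τ : ℝ → ℝ → ℝ} {p : ℝ × ℝ}

theorem contDiffOn_etaP {n : WithTop ℕ∞} {S : Set (ℝ × ℝ)} (hτ : ContDiffOn ℝ n (uncurry τ) S)
    (hpos : ∀ p ∈ S, 0 < uncurry τ p) : ContDiffOn ℝ n (uncurry (etaP K γ τ)) S :=
  contDiffOn_const.mul (hτ.rpow_const_of_ne fun p hp => (hpos p hp).ne')

theorem hasFDerivAt_etaP (hγ : γ ≠ 1) {τ' : ℝ × ℝ →L[ℝ] ℝ} (hτ : HasFDerivAt (uncurry τ) τ' p)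
    (hpos : 0 < uncurry τ p) :
    HasFDerivAt (uncurry (etaP K γ τ)) (-uncurry (cP K γ τ) p • τ') p := by
  refine ((hτ.rpow_const (p := -(γ - 1) / 2) (Or.inl hpos.ne')).const_mul
    (2 * √(K * γ) / (γ - 1))).congr_fderiv ?_
  have hγ' : γ - 1 ≠ 0 := sub_ne_zero.mpr hγ
  rw [smul_smul, show -(γ - 1) / 2 - 1 = -(γ + 1) / 2 by ring]
  congr 1
  simp only [uncurry, cP]
  field_simp

theorem hasFDerivAt_cP {τ' : ℝ × ℝ →L[ℝ] ℝ} (hτ : HasFDerivAt (uncurry τ) τ' p)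
    (hpos : 0 < uncurry τ p) :
    HasFDerivAt (uncurry (cP K γ τ))
      ((-((γ + 1) / (2 * uncurry τ p)) * uncurry (cP K γ τ) p) • τ') p := by
  refine ((hτ.rpow_const (p := -(γ + 1) / 2) (Or.inl hpos.ne')).const_mul
    √(K * γ)).congr_fderiv ?_
  rw [smul_smul, rpow_sub_one hpos.ne']
  congr 1
  simp only [uncurry, cP]
  field_simp

theorem hasFDerivAt_pressure (hK : 0 ≤ K) (hγ : 0 ≤ γ) {τ' : ℝ × ℝ →L[ℝ] ℝ}
    (hτ : HasFDerivAt (uncurry τ) τ' p) (hpos : 0 < uncurry τ p) :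
    HasFDerivAt (uncurry fun x t => K * τ x t ^ (-γ)) (-uncurry (cP K γ τ) p ^ 2 • τ') p := by
  refine ((hτ.rpow_const (p := -γ) (Or.inl hpos.ne')).const_mul K).congr_fderiv ?_
  have hsq : uncurry (cP K γ τ) p ^ 2 = K * γ * uncurry τ p ^ (-γ - 1) := by
    simp only [uncurry] at hpos ⊢
    rw [cP, mul_pow, sq_sqrt (mul_nonneg hK hγ), ← rpow_mul_natCast hpos.le]
    congr 2
    push_cast
    ring
  rw [smul_smul, hsq]
  congr 1
  ring

theorem cP_nonneg {x t : ℝ} (hpos : 0 ≤ τ x t) : 0 ≤ cP K γ τ x t :=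
  mul_nonneg (sqrt_nonneg _) (rpow_nonneg hpos _)

theorem etaP_nonneg (hγ : 1 ≤ γ) {x t : ℝ} (hpos : 0 ≤ τ x t) : 0 ≤ etaP K γ τ x t :=
  mul_nonneg (div_nonneg (by positivity) (sub_nonneg.mpr hγ)) (rpow_nonneg hpos _)

theorem cP_eq_KcC_mul_etaP_rpow (hK : 0 < K) (hγ : 1 < γ) {x t : ℝ} (hpos : 0 < τ x t) :
    cP K γ τ x t = KcC K γ * etaP K γ τ x t ^ ((γ + 1) / (γ - 1)) := by
  have hγ' : 0 < γ - 1 := sub_pos.mpr hγ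
  have hA : 0 < 2 * √(K * γ) / (γ - 1) := by positivity
  have hexp : 2 / (γ - 1) * (-(γ + 1) / 2) + (γ + 1) / (γ - 1) = 0 := by field_simp; ring
  have hexp' : -(γ - 1) / 2 * ((γ + 1) / (γ - 1)) = -(γ + 1) / 2 := by field_simp
  rw [cP, KcC, KtauC, etaP, mul_rpow hA.le (rpow_nonneg hpos.le _), ← rpow_mul hA.le,
    ← rpow_mul hpos.le, hexp', mul_assoc, ← mul_assoc (_ ^ _), ← rpow_add hA, hexp, rpow_zero,
    one_mul]

theorem cP_le_of_etaP_le (hK : 0 < K) (hγ : 1 < γ) {x t E : ℝ} (hpos : 0 < τ x t)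
    (hE : etaP K γ τ x t ≤ E) : cP K γ τ x t ≤ KcC K γ * E ^ ((γ + 1) / (γ - 1)) := by
  have : 0 < γ - 1 := sub_pos.mpr hγ
  have hKc : 0 ≤ KcC K γ := by unfold KcC KtauC; positivity
  rw [cP_eq_KcC_mul_etaP_rpow hK hγ hpos]
  have := etaP_nonneg (K := K) hγ.le hpos.le
  gcongr

theorem etaP_le_of_one_div_le (hγ : 1 ≤ γ) {x t C : ℝ} (hpos : 0 < τ x t) (hC : 1 / τ x t ≤ C) :
    etaP K γ τ x t ≤ 2 * √(K * γ) / (γ - 1) * C ^ ((γ - 1) / 2) := by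
  have : 0 ≤ γ - 1 := sub_nonneg.mpr hγ
  rw [etaP, neg_div, rpow_neg hpos.le, ← inv_rpow hpos.le, ← one_div]
  gcongr

theorem etaP_eq_sRi_sub_rRi (u : ℝ → ℝ → ℝ) (x t : ℝ) :
    etaP K γ τ x t = (sRi K γ u τ x t - rRi K γ u τ x t) / 2 := by
  simp only [sRi, rRi]
  ring

variable {u : ℝ → ℝ → ℝ}

theorem alphaP_eq_fderiv_sRi (hu : DifferentiableAt ℝ (uncurry u) p)
    (hη : DifferentiableAt ℝ (uncurry (etaP K γ τ)) p) :
    uncurry (alphaP K γ u τ) p = fderiv ℝ (uncurry (sRi K γ u τ)) p (1, 0) := by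
  have hs : HasFDerivAt (uncurry (sRi K γ u τ)) _ p := hu.hasFDerivAt.add hη.hasFDerivAt
  rw [hs.fderiv, add_apply, ← pdx_eq_fderiv hu, ← pdx_eq_fderiv hη]
  rfl

theorem betaP_eq_fderiv_rRi (hu : DifferentiableAt ℝ (uncurry u) p)
    (hη : DifferentiableAt ℝ (uncurry (etaP K γ τ)) p) :
    uncurry (betaP K γ u τ) p = fderiv ℝ (uncurry (rRi K γ u τ)) p (1, 0) := by
  have hr : HasFDerivAt (uncurry (rRi K γ u τ)) _ p := hu.hasFDerivAt.sub hη.hasFDerivAt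
  rw [hr.fderiv, sub_apply, ← pdx_eq_fderiv hu, ← pdx_eq_fderiv hη]
  rfl

theorem fderiv_cP_apply_eq_alphaP_sub_betaP (hγ : γ ≠ 1)
    (hτ : DifferentiableAt ℝ (uncurry τ) p) (hpos : 0 < uncurry τ p) :
    fderiv ℝ (uncurry (cP K γ τ)) p (1, 0) = (γ + 1) / (4 * uncurry τ p) *
      (uncurry (alphaP K γ u τ) p - uncurry (betaP K γ u τ) p) := by
  have hη := hasFDerivAt_etaP (K := K) hγ hτ.hasFDerivAt hpos
  have hαβ : uncurry (alphaP K γ u τ) p - uncurry (betaP K γ u τ) p =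
      2 * fderiv ℝ (uncurry (etaP K γ τ)) p (1, 0) := by
    rw [← pdx_eq_fderiv hη.differentiableAt]
    simp only [uncurry, alphaP, betaP]
    ring
  rw [hαβ, hη.fderiv, (hasFDerivAt_cP hτ.hasFDerivAt hpos).fderiv]
  simp only [smul_apply, smul_eq_mul]
  field_simp
  ring

theorem pSystem.fderiv_eq (hK : 0 ≤ K) (hγ : 0 ≤ γ) (h : pSystem K γ u τ p.1 p.2)
    (hu : DifferentiableAt ℝ (uncurry u) p) (hτ : DifferentiableAt ℝ (uncurry τ) p)
    (hpos : 0 < uncurry τ p) :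
    fderiv ℝ (uncurry τ) p (0, 1) = fderiv ℝ (uncurry u) p (1, 0) ∧
      fderiv ℝ (uncurry u) p (0, 1) =
        uncurry (cP K γ τ) p ^ 2 * fderiv ℝ (uncurry τ) p (1, 0) := by
  obtain ⟨hmass, hmomentum⟩ := h
  have hpressure := hasFDerivAt_pressure hK hγ hτ.hasFDerivAt hpos
  rw [pdt_eq_fderiv hτ, pdx_eq_fderiv hu] at hmass
  rw [pdt_eq_fderiv hu, pdx_eq_fderiv hpressure.differentiableAt, hpressure.fderiv] at hmomentum
  simp only [smul_apply, smul_eq_mul] at hmomentum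
  exact ⟨by linarith, by linarith⟩

theorem pSystem.transport_riemannInvariants (hK : 0 ≤ K) (hγ : 1 < γ)
    (h : pSystem K γ u τ p.1 p.2) (hu : DifferentiableAt ℝ (uncurry u) p)
    (hτ : DifferentiableAt ℝ (uncurry τ) p) (hpos : 0 < uncurry τ p) :
    fderiv ℝ (uncurry (sRi K γ u τ)) p (uncurry (cP K γ τ) p, 1) = 0 ∧
      fderiv ℝ (uncurry (rRi K γ u τ)) p (-uncurry (cP K γ τ) p, 1) = 0 := by
  have hη := hasFDerivAt_etaP (K := K) hγ.ne' hτ.hasFDerivAt hpos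
  have hs : HasFDerivAt (uncurry (sRi K γ u τ)) _ p := hu.hasFDerivAt.add hη
  have hr : HasFDerivAt (uncurry (rRi K γ u τ)) _ p := hu.hasFDerivAt.sub hη
  have hdir (L : ℝ × ℝ →L[ℝ] ℝ) (v : ℝ) : L (v, 1) = v * L (1, 0) + L (0, 1) := by
    rw [← smul_eq_mul, ← map_smul, ← map_add]
    simp
  obtain ⟨hmass, hmomentum⟩ := h.fderiv_eq hK (zero_le_one.trans hγ.le) hu hτ hpos
  rw [hs.fderiv, hr.fderiv, hdir _ (uncurry (cP K γ τ) p), hdir _ (-uncurry (cP K γ τ) p)]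
  simp only [add_apply, sub_apply, smul_apply, smul_eq_mul, hmass, hmomentum]
  constructor <;> ring

end ConstitutiveLaw

/-- A classical solution of the p-system on `ℝ × [0, T)`: `u` and `τ` are twice continuously
differentiable up to the initial time, and `τ` is positive. The equations are imposed for `0 < t`
only, because the two-sided derivative `pdt` at `t = 0` would involve values at negative times. -/
structure IsClassicalSolution (K γ : ℝ) (T : EReal) (u τ : ℝ → ℝ → ℝ) : Prop where
  contDiffOn_u : ContDiffOn ℝ 2 (fun p : ℝ × ℝ => u p.1 p.2) (strip T)
  contDiffOn_τ : ContDiffOn ℝ 2 (fun p : ℝ × ℝ => τ p.1 p.2) (strip T)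
  τ_pos : ∀ x t : ℝ, 0 ≤ t → (t : EReal) < T → 0 < τ x t
  pSystem : ∀ x t : ℝ, 0 < t → (t : EReal) < T → pSystem K γ u τ x t

namespace IsClassicalSolution

variable {K γ : ℝ} {T : EReal} {u τ : ℝ → ℝ → ℝ} {p : ℝ × ℝ}

theorem uncurry_τ_pos (h : IsClassicalSolution K γ T u τ) (hp : p ∈ strip T) : 0 < uncurry τ p :=
  h.τ_pos p.1 p.2 hp.1 hp.2

theorem contDiffOn_eta (h : IsClassicalSolution K γ T u τ) :
    ContDiffOn ℝ 2 (uncurry (etaP K γ τ)) (strip T) :=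
  contDiffOn_etaP h.contDiffOn_τ fun _ => h.uncurry_τ_pos

theorem contDiffOn_sRi (h : IsClassicalSolution K γ T u τ) :
    ContDiffOn ℝ 2 (uncurry (sRi K γ u τ)) (strip T) :=
  h.contDiffOn_u.add h.contDiffOn_eta

theorem contDiffOn_rRi (h : IsClassicalSolution K γ T u τ) :
    ContDiffOn ℝ 2 (uncurry (rRi K γ u τ)) (strip T) :=
  h.contDiffOn_u.sub h.contDiffOn_eta

theorem continuousOn_alphaP (h : IsClassicalSolution K γ T u τ) (hT : 0 < T) :
    ContinuousOn (uncurry (alphaP K γ u τ)) (strip T) :=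
  (continuousOn_pdx hT (h.contDiffOn_u.of_le one_le_two)).add
    (continuousOn_pdx hT (h.contDiffOn_eta.of_le one_le_two))

theorem continuousOn_betaP (h : IsClassicalSolution K γ T u τ) (hT : 0 < T) :
    ContinuousOn (uncurry (betaP K γ u τ)) (strip T) :=
  (continuousOn_pdx hT (h.contDiffOn_u.of_le one_le_two)).sub
    (continuousOn_pdx hT (h.contDiffOn_eta.of_le one_le_two))

theorem differentiableAt_u (h : IsClassicalSolution K γ T u τ) (hp : p ∈ interior (strip T)) :
    DifferentiableAt ℝ (uncurry u) p :=
  (h.contDiffOn_u.contDiffAt (mem_interior_iff_mem_nhds.mp hp)).differentiableAt two_ne_zero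

theorem differentiableAt_τ (h : IsClassicalSolution K γ T u τ) (hp : p ∈ interior (strip T)) :
    DifferentiableAt ℝ (uncurry τ) p :=
  (h.contDiffOn_τ.contDiffAt (mem_interior_iff_mem_nhds.mp hp)).differentiableAt two_ne_zero

theorem differentiableAt_eta (h : IsClassicalSolution K γ T u τ) (hp : p ∈ interior (strip T)) :
    DifferentiableAt ℝ (uncurry (etaP K γ τ)) p :=
  (h.contDiffOn_eta.contDiffAt (mem_interior_iff_mem_nhds.mp hp)).differentiableAt two_ne_zero

theorem differentiableAt_cP (h : IsClassicalSolution K γ T u τ) (hp : p ∈ interior (strip T)) :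
    DifferentiableAt ℝ (uncurry (cP K γ τ)) p :=
  (hasFDerivAt_cP (h.differentiableAt_τ hp).hasFDerivAt
    (h.uncurry_τ_pos (interior_subset hp))).differentiableAt

theorem contDiffAt_sRi (h : IsClassicalSolution K γ T u τ) (hp : p ∈ interior (strip T)) :
    ContDiffAt ℝ 2 (uncurry (sRi K γ u τ)) p :=
  h.contDiffOn_sRi.contDiffAt (mem_interior_iff_mem_nhds.mp hp)

theorem contDiffAt_rRi (h : IsClassicalSolution K γ T u τ) (hp : p ∈ interior (strip T)) :
    ContDiffAt ℝ 2 (uncurry (rRi K γ u τ)) p :=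
  h.contDiffOn_rRi.contDiffAt (mem_interior_iff_mem_nhds.mp hp)

theorem transport_riemannInvariants (h : IsClassicalSolution K γ T u τ) (hK : 0 ≤ K) (hγ : 1 < γ)
    (hp : p ∈ interior (strip T)) :
    fderiv ℝ (uncurry (sRi K γ u τ)) p (uncurry (cP K γ τ) p, 1) = 0 ∧
      fderiv ℝ (uncurry (rRi K γ u τ)) p (-uncurry (cP K γ τ) p, 1) = 0 := by
  have htime : 0 < p.2 ∧ (p.2 : EReal) < T := by rwa [interior_strip] at hp
  exact (h.pSystem p.1 p.2 htime.1 htime.2).transport_riemannInvariants hK hγ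
    (h.differentiableAt_u hp) (h.differentiableAt_τ hp) (h.uncurry_τ_pos (interior_subset hp))

theorem riccati_alphaP (h : IsClassicalSolution K γ T u τ) (hK : 0 ≤ K) (hγ : 1 < γ)
    (hp : p ∈ interior (strip T)) :
    DifferentiableAt ℝ (uncurry (alphaP K γ u τ)) p ∧
      fderiv ℝ (uncurry (alphaP K γ u τ)) p (uncurry (cP K γ τ) p, 1) =
        (γ + 1) / (4 * uncurry τ p) * (uncurry (alphaP K γ u τ) p *
          (uncurry (betaP K γ u τ) p - uncurry (alphaP K γ u τ) p)) := by
  have hnhds := isOpen_interior.mem_nhds hp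
  have hα : uncurry (alphaP K γ u τ) =ᶠ[𝓝 p]
      fun q => fderiv ℝ (uncurry (sRi K γ u τ)) q (1, 0) := by
    filter_upwards [hnhds] with q hq
    exact alphaP_eq_fderiv_sRi (h.differentiableAt_u hq) (h.differentiableAt_eta hq)
  obtain ⟨hdiff, hderiv⟩ := fderiv_spatial_deriv_of_transport (h.contDiffAt_sRi hp)
    (h.differentiableAt_cP hp)
    (eventually_of_mem hnhds fun q hq => (h.transport_riemannInvariants hK hγ hq).1)
  refine ⟨hdiff.congr_of_eventuallyEq hα, ?_⟩
  rw [hα.fderiv_eq, hderiv, ← hα.eq_of_nhds, fderiv_cP_apply_eq_alphaP_sub_betaP (u := u) hγ.ne'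
    (h.differentiableAt_τ hp) (h.uncurry_τ_pos (interior_subset hp))]
  ring

theorem riccati_betaP (h : IsClassicalSolution K γ T u τ) (hK : 0 ≤ K) (hγ : 1 < γ)
    (hp : p ∈ interior (strip T)) :
    DifferentiableAt ℝ (uncurry (betaP K γ u τ)) p ∧
      fderiv ℝ (uncurry (betaP K γ u τ)) p (-uncurry (cP K γ τ) p, 1) =
        (γ + 1) / (4 * uncurry τ p) * (uncurry (betaP K γ u τ) p *
          (uncurry (alphaP K γ u τ) p - uncurry (betaP K γ u τ) p)) := by
  have hnhds := isOpen_interior.mem_nhds hp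
  have hβ : uncurry (betaP K γ u τ) =ᶠ[𝓝 p]
      fun q => fderiv ℝ (uncurry (rRi K γ u τ)) q (1, 0) := by
    filter_upwards [hnhds] with q hq
    exact betaP_eq_fderiv_rRi (h.differentiableAt_u hq) (h.differentiableAt_eta hq)
  obtain ⟨hdiff, hderiv⟩ := fderiv_spatial_deriv_of_transport (h.contDiffAt_rRi hp)
    (h.differentiableAt_cP hp).fun_neg
    (eventually_of_mem hnhds fun q hq => (h.transport_riemannInvariants hK hγ hq).2)
  refine ⟨hdiff.congr_of_eventuallyEq hβ, ?_⟩
  rw [hβ.fderiv_eq, hderiv, ← hβ.eq_of_nhds, fderiv_fun_neg, neg_apply,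
    fderiv_cP_apply_eq_alphaP_sub_betaP (u := u) hγ.ne' (h.differentiableAt_τ hp)
      (h.uncurry_τ_pos (interior_subset hp))]
  ring

theorem exists_initial_riemannInvariants_le (h : IsClassicalSolution K γ T u τ) (hγ : 1 ≤ γ)
    (hT : 0 < T) (hbdd : ∃ C, ∀ x, |u x 0| ≤ C ∧ 1 / τ x 0 ≤ C) :
    ∃ m, ∀ x, sRi K γ u τ x 0 ≤ m ∧ -rRi K γ u τ x 0 ≤ m := by
  obtain ⟨C, hC⟩ := hbdd
  refine ⟨C + 2 * √(K * γ) / (γ - 1) * C ^ ((γ - 1) / 2), fun x => ?_⟩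
  have hη := etaP_le_of_one_div_le (K := K) hγ (h.τ_pos x 0 le_rfl hT) (hC x).2
  obtain ⟨hlow, hup⟩ := abs_le.mp (hC x).1
  constructor
  · exact add_le_add hup hη
  · simp only [rRi]
    linarith

theorem riemannInvariants_le (h : IsClassicalSolution K γ T u τ) (hK : 0 < K) (hγ : 1 < γ) {m : ℝ}
    (hinit : ∀ x, sRi K γ u τ x 0 ≤ m ∧ -rRi K γ u τ x 0 ≤ m) (hp : p ∈ strip T) :
    uncurry (sRi K γ u τ) p ≤ m ∧ -uncurry (rRi K γ u τ) p ≤ m := by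
  have hsub := slab_subset_strip le_rfl hp.2
  have hint : ∀ q : ℝ × ℝ, q.2 ∈ Ioc 0 p.2 → q ∈ interior (strip T) :=
    fun q => mem_interior_strip_of_mem_Ioc le_rfl hp.2
  refine le_of_opposite_transport (c := uncurry (cP K γ τ))
    (Λ := KcC K γ * (m + 1) ^ ((γ + 1) / (γ - 1))) one_pos
    (h.contDiffOn_sRi.continuousOn.mono hsub) (h.contDiffOn_rRi.continuousOn.mono hsub).neg
    (fun q hq => (h.contDiffAt_sRi (hint q hq)).differentiableAt two_ne_zero)
    (fun q hq => ((h.contDiffAt_rRi (hint q hq)).differentiableAt two_ne_zero).neg)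
    (fun x => (hinit x).1) (fun x => (hinit x).2) (fun q hq hs hr => ?_)
    (fun q hq _ _ => (h.transport_riemannInvariants hK.le hγ (hint q hq)).1.le)
    (fun q hq _ _ => ?_) ⟨hp.1, le_rfl⟩
  · have hτ : 0 < τ q.1 q.2 := h.uncurry_τ_pos (interior_subset (hint q hq))
    have hη : etaP K γ τ q.1 q.2 ≤ m + 1 := by
      rw [etaP_eq_sRi_sub_rRi u]
      simp only [Pi.neg_apply, uncurry] at hs hr
      linarith
    exact (abs_of_nonneg (cP_nonneg hτ.le)).trans_le (cP_le_of_etaP_le hK hγ hτ hη)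
  · rw [fderiv_neg, neg_apply, (h.transport_riemannInvariants hK.le hγ (hint q hq)).2, neg_zero]

theorem cP_le_of_initial_le (h : IsClassicalSolution K γ T u τ) (hK : 0 < K) (hγ : 1 < γ) {m : ℝ}
    (hinit : ∀ x, sRi K γ u τ x 0 ≤ m ∧ -rRi K γ u τ x 0 ≤ m) (hp : p ∈ strip T) :
    uncurry (cP K γ τ) p ≤ KcC K γ * m ^ ((γ + 1) / (γ - 1)) := by
  refine cP_le_of_etaP_le hK hγ (h.uncurry_τ_pos hp) ?_
  have hm := h.riemannInvariants_le hK hγ hinit hp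
  simp only [uncurry] at hm
  rw [etaP_eq_sRi_sub_rRi u]
  linarith

theorem nonneg_of_alphaP_le (h : IsClassicalSolution K γ T u τ) (hK : 0 < K) (hγ : 1 < γ) {m : ℝ}
    (hinit : ∀ x, sRi K γ u τ x 0 ≤ m ∧ -rRi K γ u τ x 0 ≤ m) {t M : ℝ} (ht₀ : 0 ≤ t)
    (htT : (t : EReal) < T) (hα : ∀ x, alphaP K γ u τ x t ≤ M) : 0 ≤ M := by
  have hmem (x : ℝ) : (x, t) ∈ strip T := ⟨ht₀, htT⟩
  have hslice {F : ℝ → ℝ → ℝ} (hF : ContDiffOn ℝ 2 (uncurry F) (strip T)) (x : ℝ) :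
      HasDerivAt (fun y => F y t) (pdx F x t) x :=
    (hasDerivAt_spatial_slice (hF.differentiableOn two_ne_zero _ (hmem x)).hasFDerivWithinAt
      hmem).differentiableAt.hasDerivAt
  have hs (x : ℝ) : HasDerivAt (fun y => sRi K γ u τ y t) (alphaP K γ u τ x t) x :=
    (hslice h.contDiffOn_u x).add (hslice h.contDiffOn_eta x)
  refine nonneg_of_deriv_le_of_bddAbove (fun x => (hs x).differentiableAt)
    (fun x => (hs x).deriv.trans_le (hα x)) ⟨m, ?_⟩
  rintro _ ⟨x, rfl⟩
  exact (h.riemannInvariants_le hK hγ hinit (hmem x)).1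

theorem alphaP_betaP_le (h : IsClassicalSolution K γ T u τ) (hK : 0 ≤ K) (hγ : 1 < γ) {Λ M : ℝ}
    (hΛ : ∀ p ∈ strip T, uncurry (cP K γ τ) p ≤ Λ) (hM : 0 ≤ M) {t₁ t₂ : ℝ} (ht₁ : 0 ≤ t₁)
    (ht₁₂ : t₁ ≤ t₂) (ht₂ : (t₂ : EReal) < T)
    (hinit : ∀ x, alphaP K γ u τ x t₁ ≤ M ∧ betaP K γ u τ x t₁ ≤ M) (x : ℝ) :
    alphaP K γ u τ x t₂ ≤ M ∧ betaP K γ u τ x t₂ ≤ M := by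
  have hT : 0 < T := (EReal.coe_nonneg.mpr (ht₁.trans ht₁₂)).trans_lt ht₂
  have hsub := slab_subset_strip ht₁ ht₂
  have hint : ∀ q : ℝ × ℝ, q.2 ∈ Ioc t₁ t₂ → q ∈ interior (strip T) :=
    fun q => mem_interior_strip_of_mem_Ioc ht₁ ht₂
  have hτ (q : ℝ × ℝ) (hq : q.2 ∈ Ioc t₁ t₂) : 0 < uncurry τ q :=
    h.uncurry_τ_pos (interior_subset (hint q hq))
  have hsign (q : ℝ × ℝ) (hq : q.2 ∈ Ioc t₁ t₂) {y z : ℝ} (hy : M < y) (hzy : z ≤ y) :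
      (γ + 1) / (4 * uncurry τ q) * (y * (z - y)) ≤ 0 := by
    have := hτ q hq
    exact mul_nonpos_of_nonneg_of_nonpos (by positivity)
      (mul_nonpos_of_nonneg_of_nonpos (hM.trans hy.le) (sub_nonpos.mpr hzy))
  refine le_of_opposite_transport (c := uncurry (cP K γ τ)) (Λ := Λ) (p := (x, t₂)) one_pos
    ((h.continuousOn_alphaP hT).mono hsub) ((h.continuousOn_betaP hT).mono hsub)
    (fun q hq => (h.riccati_alphaP hK hγ (hint q hq)).1)
    (fun q hq => (h.riccati_betaP hK hγ (hint q hq)).1)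
    (fun y => (hinit y).1) (fun y => (hinit y).2) (fun q hq _ _ => ?_)
    (fun q hq hα hβα => ?_) (fun q hq hβ hαβ => ?_) ⟨ht₁₂, le_rfl⟩
  · exact (abs_of_nonneg (cP_nonneg (hτ q hq).le)).trans_le (hΛ q (interior_subset (hint q hq)))
  · exact (h.riccati_alphaP hK hγ (hint q hq)).2.trans_le (hsign q hq hα hβα)
  · exact (h.riccati_betaP hK hγ (hint q hq)).2.trans_le (hsign q hq hβ hαβ)

end IsClassicalSolution

theorem psystem_max_rarefaction_nonincreasing_general {K γ : ℝ} {T : EReal} {u τ : ℝ → ℝ → ℝ}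
    (h : IsClassicalSolution K γ T u τ) (hK : 0 < K) (hγ : 1 < γ)
    (hbdd : ∃ C, ∀ x, |u x 0| ≤ C ∧ 1 / τ x 0 ≤ C)
    {t₁ t₂ : ℝ} (ht₁ : 0 ≤ t₁) (ht₁₂ : t₁ ≤ t₂) (ht₂ : (t₂ : EReal) < T) :
    (⨆ x : ℝ, ((max (alphaP K γ u τ x t₂) (betaP K γ u τ x t₂) : ℝ) : EReal)) ≤
      ⨆ x : ℝ, ((max (alphaP K γ u τ x t₁) (betaP K γ u τ x t₁) : ℝ) : EReal) := by
  have hT : 0 < T := (EReal.coe_nonneg.mpr (ht₁.trans ht₁₂)).trans_lt ht₂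
  have ht₁T : (t₁ : EReal) < T := (EReal.coe_le_coe_iff.mpr ht₁₂).trans_lt ht₂
  obtain ⟨m, hm⟩ := h.exists_initial_riemannInvariants_le hγ.le hT hbdd
  refine EReal.le_of_forall_lt_iff_le.mp fun M hM => ?_
  have hinit (x : ℝ) : alphaP K γ u τ x t₁ ≤ M ∧ betaP K γ u τ x t₁ ≤ M := by
    rw [← max_le_iff, ← EReal.coe_le_coe_iff]
    exact iSup_le_iff.mp hM.le x
  have hM₀ : 0 ≤ M := h.nonneg_of_alphaP_le hK hγ hm ht₁ ht₁T fun x => (hinit x).1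
  refine iSup_le fun x => EReal.coe_le_coe_iff.mpr (max_le_iff.mpr ?_)
  exact h.alphaP_betaP_le hK.le hγ (fun p => h.cP_le_of_initial_le hK hγ hm) hM₀ ht₁ ht₁₂ ht₂
    hinit x

/-- the maximum rarefaction `sup_x max{α,β}` is non-increasing in time. -/
theorem psystem_max_rarefaction_nonincreasing
    (K γ : ℝ) (hK : 0 < K) (hγ : 1 < γ)
    (T : EReal) (hT : 0 < T)
    (u τ : ℝ → ℝ → ℝ)
    (hu_reg : ContDiffOn ℝ 2 (fun p : ℝ × ℝ => u p.1 p.2) (strip T))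
    (hτ_reg : ContDiffOn ℝ 2 (fun p : ℝ × ℝ => τ p.1 p.2) (strip T))
    (hτ_pos : ∀ x t : ℝ, 0 ≤ t → (t : EReal) < T → 0 < τ x t)
    (hpde : ∀ x t : ℝ, 0 ≤ t → (t : EReal) < T → pSystem K γ u τ x t)
    (hbdd : ∃ C : ℝ, ∀ x : ℝ, |u x 0| ≤ C ∧ τ x 0 ≤ C ∧ 1 / τ x 0 ≤ C ∧
      |alphaP K γ u τ x 0| ≤ C ∧ |betaP K γ u τ x 0| ≤ C) :
    ∀ t₁ t₂ : ℝ, 0 ≤ t₁ → t₁ ≤ t₂ → (t₂ : EReal) < T →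
      (⨆ x : ℝ, ((max (alphaP K γ u τ x t₂) (betaP K γ u τ x t₂) : ℝ) : EReal)) ≤
      (⨆ x : ℝ, ((max (alphaP K γ u τ x t₁) (betaP K γ u τ x t₁) : ℝ) : EReal)) :=
  fun _ _ => psystem_max_rarefaction_nonincreasing_general
    ⟨hu_reg, hτ_reg, hτ_pos, fun x t ht => hpde x t ht.le⟩ hK hγ
    (hbdd.imp fun _ hC x => ⟨(hC x).1, (hC x).2.2.1⟩)
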